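/- Derandomization of randomized advice for quantum witnesses (core of the theorem QMA/rpoly = QMA/poly): Let n, w be natural numbers with w ≥ 2, and set N := 2^w. Let X be a finite type with |X| ≤ 2^n (the inputs), let R be a nonempty finite type (the advice strings), let L : X → Prop be a predicate, and let D : R → ℝ be a probability distribution on R (D r ≥ 0, Σ_r D r = 1). For each x ∈ X and r ∈ R let E(x,r) be an N×N complex matrix that is a POVM element (both E(x,r) and 1 − E(x,r) are positive semidefinite); for a unit vector φ ∈ ℂ^N, the acceptance probability is the real number ⟨φ, E(x,r)φ⟩. Let δ := 2^{−(n+3w+2)}. Suppose that: (i) for every x with L x there exists a unit vector φ ∈ ℂ^N such that Σ_r D r · ⟨φ, E(x,r)φ⟩ ≥ 1 − δ, and (ii) for every x with ¬ L x and every unit vector φ ∈ ℂ^N, Σ_r D r · ⟨φ, E(x,r)φ⟩ ≤ δ. Then there exists a single fixed advice string r ∈ R such that: for every x with L x there exists a unit vector φ with ⟨φ, E(x,r)φ⟩ ≥ 2/3, and for every x with ¬ L x and every unit vector φ, ⟨φ, E(x,r)φ⟩ ≤ 1/3. -/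

import Mathlib

open Matrix BigOperators ComplexOrder

lemma qf_eq {N : ℕ} (A : Matrix (Fin N) (Fin N) ℂ) (φ : Fin N → ℂ) :
    (∑ a, ∑ b, (starRingEnd ℂ) (φ a) * A a b * φ b) = star φ ⬝ᵥ (A *ᵥ φ) := by
  simp only [dotProduct, mulVec, Finset.mul_sum, Pi.star_apply, mul_assoc]
  rfl

lemma qf_nonneg {N : ℕ} {A : Matrix (Fin N) (Fin N) ℂ} (hA : A.PosSemidef) (φ : Fin N → ℂ) :
    0 ≤ (∑ a, ∑ b, (starRingEnd ℂ) (φ a) * A a b * φ b).re := by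
  rw [qf_eq]
  exact (Complex.le_def.1 (hA.dotProduct_mulVec_nonneg φ)).1

lemma star_dot_self {N : ℕ} (v : Fin N → ℂ) :
    (star v ⬝ᵥ v).re = ∑ a, Complex.normSq (v a) := by
  simp [dotProduct, Complex.normSq_apply]

lemma qf_le_one {N : ℕ} {A : Matrix (Fin N) (Fin N) ℂ} (hA : (1 - A).PosSemidef) (φ : Fin N → ℂ)
    (hφ : ∑ a, Complex.normSq (φ a) = 1) :
    (∑ a, ∑ b, (starRingEnd ℂ) (φ a) * A a b * φ b).re ≤ 1 := by
  have h := qf_nonneg hA φ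
  rw [qf_eq, sub_mulVec, dotProduct_sub, one_mulVec, Complex.sub_re, star_dot_self, hφ] at h
  rw [qf_eq]
  linarith

lemma normSq_sum_le {N : ℕ} (u v : Fin N → ℂ) :
    Complex.normSq (∑ b, u b * v b) ≤
      (∑ b, Complex.normSq (u b)) * ∑ b, Complex.normSq (v b) := by
  simp only [Complex.normSq_eq_norm_sq]
  calc ‖∑ b, u b * v b‖ ^ 2 ≤ (∑ b, ‖u b‖ * ‖v b‖) ^ 2 := by
        gcongr
        refine (norm_sum_le _ _).trans (le_of_eq ?_)
        simp
    _ ≤ _ := Finset.sum_mul_sq_le_sq_mul_sq _ _ _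

open scoped MatrixOrder Matrix.Norms.L2Operator in
lemma psd_factor {N : ℕ} {A : Matrix (Fin N) (Fin N) ℂ} (hA : A.PosSemidef) :
    ∃ B : Matrix (Fin N) (Fin N) ℂ, A = Bᴴ * B :=
  CStarAlgebra.nonneg_iff_eq_star_mul_self.mp hA.nonneg

lemma qf_le_trace {N : ℕ} {A : Matrix (Fin N) (Fin N) ℂ} (hA : A.PosSemidef) (φ : Fin N → ℂ)
    (hφ : ∑ a, Complex.normSq (φ a) = 1) :
    (∑ a, ∑ b, (starRingEnd ℂ) (φ a) * A a b * φ b).re ≤ ∑ a, (A a a).re := by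
  obtain ⟨B, rfl⟩ := psd_factor hA
  rw [qf_eq, ← mulVec_mulVec, dotProduct_mulVec, ← star_mulVec, star_dot_self]
  have h1 : ∀ i, Complex.normSq ((B *ᵥ φ) i) ≤ ∑ b, Complex.normSq (B i b) := by
    intro i
    have := normSq_sum_le (B i) φ
    rw [hφ, mul_one] at this
    exact this
  refine (Finset.sum_le_sum fun i _ => h1 i).trans (le_of_eq ?_)
  rw [Finset.sum_comm]
  refine Finset.sum_congr rfl fun b _ => ?_
  simp [Matrix.mul_apply, Complex.normSq_apply]

lemma qf_single {N : ℕ} (A : Matrix (Fin N) (Fin N) ℂ) (c : Fin N) :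
    (∑ a, ∑ b, (starRingEnd ℂ) ((Pi.single c 1 : Fin N → ℂ) a) * A a b *
      (Pi.single c 1 : Fin N → ℂ) b) = A c c := by
  rw [qf_eq]
  simp

lemma single_unit {N : ℕ} (c : Fin N) :
    ∑ a, Complex.normSq ((Pi.single c 1 : Fin N → ℂ) a) = 1 := by
  simp [Pi.single_apply, apply_ite Complex.normSq]

lemma exists_le_of_avg {R : Type} [Fintype R] (D F : R → ℝ) (hD0 : ∀ r, 0 ≤ D r)
    (hD1 : ∑ r, D r = 1) (c : ℝ) (h : ∑ r, D r * F r ≤ c) : ∃ r, F r ≤ c := by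
  by_contra! hc
  have hr : ∃ r ∈ Finset.univ, D r ≠ 0 := by
    apply Finset.exists_ne_zero_of_sum_ne_zero
    rw [hD1]; exact one_ne_zero
  obtain ⟨r, hr, hr0⟩ := hr
  have : ∑ r, D r * c < ∑ r, D r * F r := by
    apply Finset.sum_lt_sum
    · intro i _
      exact mul_le_mul_of_nonneg_left (hc i).le (hD0 i)
    · exact ⟨r, hr, mul_lt_mul_of_pos_left (hc r) (lt_of_le_of_ne (hD0 r) hr0.symm)⟩
  rw [← Finset.sum_mul, hD1, one_mul] at this
  linarith

/-- Derandomization of randomized advice for quantum witnesses (core of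
`QMA/rpoly = QMA/poly`).  With witness dimension `N = 2^w` (`w ≥ 2`), at most
`2^n` inputs, and error `δ = 2^{-(n+3w+2)}` under the advice distribution `D`,
there is a single fixed advice string `r` for which the verifier accepts some
witness with probability `≥ 2/3` on every yes-instance, and accepts every
witness with probability `≤ 1/3` on every no-instance. -/
theorem derandomize_qma_advice
    {n w N : ℕ} (hw : 2 ≤ w) (hN : N = 2 ^ w)
    {X R : Type} [Fintype X] [Fintype R] [Nonempty R]
    (hX : Fintype.card X ≤ 2 ^ n)
    (L : X → Prop)
    (D : R → ℝ) (hD0 : ∀ r, 0 ≤ D r) (hD1 : ∑ r, D r = 1)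
    (E : X → R → Matrix (Fin N) (Fin N) ℂ)
    (hEpsd : ∀ x r, (E x r).PosSemidef)
    (hE1 : ∀ x r, (1 - E x r).PosSemidef)
    (δ : ℝ) (hδ : δ = 1 / 2 ^ (n + 3 * w + 2))
    (hyes : ∀ x, L x → ∃ φ : Fin N → ℂ, (∑ a, Complex.normSq (φ a) = 1) ∧
      1 - δ ≤ ∑ r, D r * (∑ a, ∑ b, (starRingEnd ℂ) (φ a) * E x r a b * φ b).re)
    (hno : ∀ x, ¬ L x → ∀ φ : Fin N → ℂ, (∑ a, Complex.normSq (φ a) = 1) →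
      ∑ r, D r * (∑ a, ∑ b, (starRingEnd ℂ) (φ a) * E x r a b * φ b).re ≤ δ) :
    ∃ r : R,
      (∀ x, L x → ∃ φ : Fin N → ℂ, (∑ a, Complex.normSq (φ a) = 1) ∧
        (2 / 3 : ℝ) ≤ (∑ a, ∑ b, (starRingEnd ℂ) (φ a) * E x r a b * φ b).re) ∧
      (∀ x, ¬ L x → ∀ φ : Fin N → ℂ, (∑ a, Complex.normSq (φ a) = 1) →
        (∑ a, ∑ b, (starRingEnd ℂ) (φ a) * E x r a b * φ b).re ≤ (1 / 3 : ℝ)) := by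
  classical
  choose! ψ hψ1 hψ2 using hyes
  let F : X → R → ℝ := fun x r => if L x then
    1 - (∑ a, ∑ b, (starRingEnd ℂ) (ψ x a) * E x r a b * ψ x b).re
    else ∑ a, (E x r a a).re
  have hδ0 : 0 < δ := by rw [hδ]; positivity
  have hN1 : (1 : ℝ) ≤ N := by
    rw [hN]; exact_mod_cast Nat.one_le_two_pow
  have hF0 : ∀ x r, 0 ≤ F x r := by
    intro x r
    by_cases hx : L x
    · simp only [F, if_pos hx]
      linarith [qf_le_one (hE1 x r) (ψ x) (hψ1 x hx)]
    · simp only [F, if_neg hx]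
      refine Finset.sum_nonneg fun a _ => ?_
      have := qf_nonneg (hEpsd x r) (Pi.single a 1)
      rwa [qf_single] at this
  have hFavg : ∀ x, ∑ r, D r * F x r ≤ N * δ := by
    intro x
    by_cases hx : L x
    · simp only [F, if_pos hx, mul_sub, Finset.sum_sub_distrib, mul_one, hD1]
      nlinarith [hψ2 x hx]
    · simp only [F, if_neg hx, Finset.mul_sum]
      rw [Finset.sum_comm]
      have h1 : ∀ a, ∑ r, D r * (E x r a a).re ≤ δ := by
        intro a
        have := hno x hx (Pi.single a 1) (single_unit a)
        simpa only [qf_single] using this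
      refine (Finset.sum_le_sum fun a _ => h1 a).trans (le_of_eq ?_)
      simp
  have htot : ∑ r, D r * ∑ x, F x r ≤ 1 / 3 := by
    simp only [Finset.mul_sum]
    rw [Finset.sum_comm]
    refine (Finset.sum_le_sum fun x _ => hFavg x).trans ?_
    rw [Finset.sum_const, Finset.card_univ, nsmul_eq_mul]
    have hX' : (Fintype.card X : ℝ) ≤ 2 ^ n := by exact_mod_cast hX
    have h2 : (Fintype.card X : ℝ) * (N * δ) ≤ 2 ^ n * (N * δ) := by gcongr
    refine h2.trans ?_
    have h3 : (2 : ℝ) ^ n * (N * δ) = 1 / (2 ^ w * 2 ^ w * 4) := by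
      rw [hδ, hN]
      push_cast
      rw [pow_add, pow_add, pow_mul' , pow_succ, pow_succ]
      field_simp
      norm_num
    rw [h3]
    have h4 : (1 : ℝ) ≤ 2 ^ w := one_le_pow₀ (by norm_num)
    apply one_div_le_one_div_of_le (by norm_num)
    nlinarith
  obtain ⟨r, hr⟩ := exists_le_of_avg D _ hD0 hD1 _ htot
  have hr' : ∀ x, F x r ≤ 1 / 3 := fun x =>
    (Finset.single_le_sum (f := fun x => F x r) (fun y _ => hF0 y r) (Finset.mem_univ x)).trans hr
  refine ⟨r, fun x hx => ⟨ψ x, hψ1 x hx, ?_⟩, fun x hx φ hφ => ?_⟩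
  · have := hr' x
    simp only [F, if_pos hx] at this
    linarith
  · have := hr' x
    simp only [F, if_neg hx] at this
    exact (qf_le_trace (hEpsd x r) φ hφ).trans this
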